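/- For every integer w ≥ 4, with u = w−2 and v = w−1, ∑_{a+c=w−1, a,c≥1} ζ(ā,1̄,c) = ζ(1̄,1̄,ū) + ζ(2,ū) + ζ(v̄,1̄). -/

import Mathlib

open Filter

/-- Depth-1 Euler sum `ζ(s; e) = ∑_{n ≥ 1} eⁿ / nˢ`,
defined as the limit of partial sums. `e = 1` gives `ζ(s)`, `e = -1` gives `ζ(s̄)`. -/
noncomputable def eulerSum1 (s : ℕ) (e : ℝ) : ℝ :=
  limUnder atTop (fun N : ℕ =>
    ∑ n ∈ Finset.Icc 1 N, e ^ n / (n : ℝ) ^ s)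

/-- Depth-2 Euler sum `ζ(s₁, s₂; e₁, e₂) = ∑_{n₁ > n₂ ≥ 1} e₁^{n₁} e₂^{n₂} / (n₁^{s₁} n₂^{s₂})`,
defined as the limit of iterated partial sums. A bar over an argument means the
corresponding sign is `-1`. -/
noncomputable def eulerSum2 (s₁ s₂ : ℕ) (e₁ e₂ : ℝ) : ℝ :=
  limUnder atTop (fun N : ℕ =>
    ∑ n₁ ∈ Finset.Icc 1 N, ∑ n₂ ∈ Finset.Ico 1 n₁,
      e₁ ^ n₁ * e₂ ^ n₂ / ((n₁ : ℝ) ^ s₁ * (n₂ : ℝ) ^ s₂))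

/-- Depth-3 Euler sum
`ζ(s₁, s₂, s₃; e₁, e₂, e₃) = ∑_{n₁ > n₂ > n₃ ≥ 1} e₁^{n₁} e₂^{n₂} e₃^{n₃} / (n₁^{s₁} n₂^{s₂} n₃^{s₃})`. -/
noncomputable def eulerSum3 (s₁ s₂ s₃ : ℕ) (e₁ e₂ e₃ : ℝ) : ℝ :=
  limUnder atTop (fun N : ℕ =>
    ∑ n₁ ∈ Finset.Icc 1 N, ∑ n₂ ∈ Finset.Ico 1 n₁, ∑ n₃ ∈ Finset.Ico 1 n₂,
      e₁ ^ n₁ * e₂ ^ n₂ * e₃ ^ n₃ / ((n₁ : ℝ) ^ s₁ * (n₂ : ℝ) ^ s₂ * (n₃ : ℝ) ^ s₃))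

/-- Depth-1 multiple T-value `T(s) = 2 ∑_{m odd, m ≥ 1} 1 / mˢ`. -/
noncomputable def tValue1 (s : ℕ) : ℝ :=
  limUnder atTop (fun N : ℕ =>
    ∑ m ∈ Finset.Icc 1 N, if m % 2 = 1 then 2 / (m : ℝ) ^ s else 0)

/-- Depth-2 multiple T-value
`T(s₁, s₂) = ∑_{m₁ > m₂ > 0, m₁ even, m₂ odd} 4 / (m₁^{s₁} m₂^{s₂})`. -/
noncomputable def tValue2 (s₁ s₂ : ℕ) : ℝ :=
  limUnder atTop (fun N : ℕ =>
    ∑ m₁ ∈ Finset.Icc 1 N, ∑ m₂ ∈ Finset.Ico 1 m₁,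
      if m₁ % 2 = 0 ∧ m₂ % 2 = 1 then 4 / ((m₁ : ℝ) ^ s₁ * (m₂ : ℝ) ^ s₂) else 0)

/-- Depth-3 multiple T-value
`T(s₁, s₂, s₃) = ∑_{m₁ > m₂ > m₃ > 0, m₁ odd, m₂ even, m₃ odd} 8 / (m₁^{s₁} m₂^{s₂} m₃^{s₃})`. -/
noncomputable def tValue3 (s₁ s₂ s₃ : ℕ) : ℝ :=
  limUnder atTop (fun N : ℕ =>
    ∑ m₁ ∈ Finset.Icc 1 N, ∑ m₂ ∈ Finset.Ico 1 m₁, ∑ m₃ ∈ Finset.Ico 1 m₂,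
      if m₁ % 2 = 1 ∧ m₂ % 2 = 0 ∧ m₃ % 2 = 1 then
        8 / ((m₁ : ℝ) ^ s₁ * (m₂ : ℝ) ^ s₂ * (m₃ : ℝ) ^ s₃) else 0)

/-!
Truncate all sums at `n₁ ≤ N` and put `u = w - 2`. On the left, the geometric sum
`∑_{a + c = u + 1} n⁻ᵃ k⁻ᶜ = (k⁻ᵘ - n⁻ᵘ) / (n - k)` leaves a linear combination of the powers `k⁻ᵘ`,
`1 ≤ k ≤ N`; the right-hand side is one already. Its coefficients are double sums over blocks
`∑_{k < m ≤ q} (-1)ᵐ / m`. After the shift `n = k + p` the blocks on the two sides differ only by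
the `k - 1` terms `m = p + j`, `0 < j < k`, and summing `1 / (p (p + j))` over `p` telescopes.
The two coefficients of `k⁻ᵘ` thus differ by at most `k / (N + 1 - k)`. Since `u ≥ 2`, the truncated
sides differ by at most `∑_{k ≤ N} 1 / (k (N + 1 - k)) = 2 / (N + 1) * ∑_{k ≤ N} 1 / k`, which
tends to `0`.
-/

section AlternatingSums

open Finset
open scoped Topology

variable {f : ℕ → ℝ}

lemma abs_sum_range_alternating_le (hf : Antitone f) (hf₀ : ∀ n, 0 ≤ f n) (n : ℕ) :
    |∑ i ∈ range n, (-1) ^ i * f i| ≤ f 0 := by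
  suffices h : 0 ≤ ∑ i ∈ range n, (-1) ^ i * f i ∧ ∑ i ∈ range n, (-1) ^ i * f i ≤ f 0 from
    abs_le.2 ⟨by linarith [hf₀ 0], h.2⟩
  induction n generalizing f with
  | zero => simpa using hf₀ 0
  | succ n ih =>
    have hsplit : ∑ i ∈ range (n + 1), (-1) ^ i * f i =
        f 0 - ∑ i ∈ range n, (-1) ^ i * f (i + 1) := by
      rw [sum_range_succ', sub_eq_neg_add, ← sum_neg_distrib]
      simp [pow_succ]
    have htail := ih (f := fun i => f (i + 1)) (fun i j hij => hf (by omega)) (fun i => hf₀ _)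
    rw [hsplit]
    constructor <;> linarith [hf (Nat.zero_le 1)]

lemma sum_Ioc_alternating (f : ℕ → ℝ) (m N : ℕ) :
    ∑ n ∈ Ioc m N, (-1) ^ n * f n =
      (-1) ^ (m + 1) * ∑ i ∈ range (N - m), (-1) ^ i * f (m + 1 + i) := by
  rw [← Ico_add_one_add_one_eq_Ioc, sum_Ico_eq_sum_range, Nat.add_sub_add_right, mul_sum]
  exact sum_congr rfl fun i _ => by rw [pow_add, mul_assoc]

lemma abs_sum_Ioc_alternating_le (hf : Antitone fun n => f (n + 1)) (hf₀ : ∀ n, 0 ≤ f (n + 1))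
    (m N : ℕ) : |∑ n ∈ Ioc m N, (-1) ^ n * f n| ≤ f (m + 1) := by
  rw [sum_Ioc_alternating, abs_mul, abs_neg_one_pow, one_mul]
  refine abs_sum_range_alternating_le (f := fun i => f (m + 1 + i)) (fun i j hij => ?_)
    (fun i => ?_) (N - m)
  · simpa only [add_right_comm m] using hf (Nat.add_le_add_left hij m)
  · simpa only [add_right_comm m] using hf₀ (m + i)

lemma exists_tendsto_sum_Ioc_alternating (hf : Antitone fun n => f (n + 1))
    (hf₀ : Tendsto f atTop (𝓝 0)) (m : ℕ) :
    ∃ l, Tendsto (fun N => ∑ n ∈ Ioc m N, (-1) ^ n * f n) atTop (𝓝 l) := by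
  have hanti : Antitone fun i => f (m + 1 + i) := fun i j hij => by
    simpa only [add_right_comm m] using hf (Nat.add_le_add_left hij m)
  have hzero : Tendsto (fun i => f (m + 1 + i)) atTop (𝓝 0) := by
    simpa only [add_comm (m + 1)] using (tendsto_add_atTop_iff_nat (m + 1)).2 hf₀
  obtain ⟨l, hl⟩ := hanti.tendsto_alternating_series_of_tendsto_zero hzero
  refine ⟨(-1) ^ (m + 1) * l, ?_⟩
  simpa only [sum_Ioc_alternating, Function.comp_def] using
    (hl.comp (tendsto_sub_atTop_nat m)).const_mul ((-1) ^ (m + 1))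

-- Exchanging the sums leaves alternating blocks of size at most `f (m + 1)`, so Tannery applies.
lemma exists_tendsto_sum_alternating_mul_sum {x : ℕ → ℝ} (hf : Antitone fun n => f (n + 1))
    (hf₀ : Tendsto f atTop (𝓝 0)) (hx : Summable fun m => f (m + 1) * |x m|) :
    ∃ l, Tendsto (fun N => ∑ n ∈ Icc 1 N, (-1) ^ n * f n * ∑ m ∈ range n, x m) atTop (𝓝 l) := by
  choose l hl using exists_tendsto_sum_Ioc_alternating hf hf₀
  have hnonneg : ∀ n, 0 ≤ f (n + 1) := hf.le_of_tendsto ((tendsto_add_atTop_iff_nat 1).2 hf₀)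
  have hlim := tendsto_tsum_of_dominated_convergence hx
    (f := fun N m => x m * ∑ n ∈ Ioc m N, (-1) ^ n * f n) (fun m => (hl m).const_mul (x m))
    (Eventually.of_forall fun N m => by
      rw [Real.norm_eq_abs, abs_mul, mul_comm]
      exact mul_le_mul_of_nonneg_right (abs_sum_Ioc_alternating_le hf hnonneg m N) (abs_nonneg _))
  refine ⟨_, hlim.congr fun N => ?_⟩
  have hsupport : ∀ m ∉ range N, x m * ∑ n ∈ Ioc m N, (-1) ^ n * f n = 0 := fun m hm => by
    rw [Ioc_eq_empty_of_le (by simpa using hm), sum_empty, mul_zero]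
  simp_rw [tsum_eq_sum hsupport, mul_sum]
  rw [sum_comm' (t' := Icc 1 N) (s' := range) (by simp only [mem_range, mem_Ioc, mem_Icc]; omega)]
  exact sum_congr rfl fun n _ => sum_congr rfl fun m _ => mul_comm _ _

end AlternatingSums

section Convergence

open Finset
open scoped Topology

lemma antitone_one_div_add_one_pow (s : ℕ) :
    Antitone fun n : ℕ => 1 / ((n + 1 : ℕ) : ℝ) ^ s := fun m n hmn => by
  dsimp only
  gcongr

lemma abs_pow_div_pow_le {e : ℝ} (he : |e| ≤ 1) {r s : ℕ} (hrs : r ≤ s) (n : ℕ) :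
    |e ^ n / (n : ℝ) ^ s| ≤ 1 / (n : ℝ) ^ r := by
  rw [abs_div, abs_pow, abs_of_nonneg (by positivity : (0 : ℝ) ≤ (n : ℝ) ^ s)]
  have hpow : |e| ^ n ≤ 1 := pow_le_one₀ (abs_nonneg e) he
  rcases n.eq_zero_or_pos with rfl | hn
  · rcases s.eq_zero_or_pos with rfl | hs
    · simp [Nat.le_zero.1 hrs]
    · simp [hs.ne']
  · have hn' : (1 : ℝ) ≤ n := by exact_mod_cast hn
    gcongr

lemma abs_sum_pow_div_pow_le {e : ℝ} (he : |e| ≤ 1) {s : ℕ} (hs : 1 ≤ s) (n : ℕ) :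
    |∑ k ∈ Ico 1 n, e ^ k / (k : ℝ) ^ s| ≤ ∑ k ∈ Ico 1 n, 1 / (k : ℝ) :=
  (abs_sum_le_sum_abs _ _).trans <| sum_le_sum fun k _ => by
    simpa only [pow_one] using abs_pow_div_pow_le he hs k

lemma summable_sum_one_div_div_sq :
    Summable fun n : ℕ => (∑ k ∈ Ico 1 n, 1 / (k : ℝ)) / (n : ℝ) ^ 2 := by
  have hsq : Summable fun k : ℕ => 2 * (1 / (k : ℝ) ^ 2) :=
    (Real.summable_one_div_nat_pow.2 one_lt_two).mul_left 2
  refine summable_of_sum_range_le (c := ∑' k : ℕ, 2 * (1 / (k : ℝ) ^ 2))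
    (fun n => by positivity) fun N => ?_
  calc ∑ n ∈ range N, (∑ k ∈ Ico 1 n, 1 / (k : ℝ)) / (n : ℝ) ^ 2
      = ∑ k ∈ Ico 1 N, 1 / (k : ℝ) * ∑ n ∈ Ioo k N, ((n : ℝ) ^ 2)⁻¹ := by
        simp_rw [sum_div, mul_sum, div_eq_mul_inv]
        exact sum_comm' (by simp only [mem_range, mem_Ico, mem_Ioo]; omega)
    _ ≤ ∑ k ∈ Ico 1 N, 2 * (1 / (k : ℝ) ^ 2) := by
        refine sum_le_sum fun k hk => ?_
        have hk' : (0 : ℝ) < k := by exact_mod_cast (mem_Ico.1 hk).1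
        calc 1 / (k : ℝ) * ∑ n ∈ Ioo k N, ((n : ℝ) ^ 2)⁻¹ ≤ 1 / k * (2 / k) := by
              gcongr
              exact (sum_Ioo_inv_sq_le k N).trans (by gcongr; linarith)
          _ = 2 * (1 / (k : ℝ) ^ 2) := by ring
    _ ≤ ∑' k : ℕ, 2 * (1 / (k : ℝ) ^ 2) := hsq.sum_le_tsum _ fun k _ => by positivity

lemma tendsto_eulerSum2 {s₁ s₂ : ℕ} (hs₁ : 2 ≤ s₁) (hs₂ : 1 ≤ s₂) {e₁ e₂ : ℝ} (he₁ : |e₁| ≤ 1)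
    (he₂ : |e₂| ≤ 1) :
    Tendsto (fun N : ℕ => ∑ n₁ ∈ Icc 1 N, ∑ n₂ ∈ Ico 1 n₁,
      e₁ ^ n₁ * e₂ ^ n₂ / ((n₁ : ℝ) ^ s₁ * (n₂ : ℝ) ^ s₂)) atTop (𝓝 (eulerSum2 s₁ s₂ e₁ e₂)) := by
  have hsummable : Summable fun n : ℕ =>
      e₁ ^ n / (n : ℝ) ^ s₁ * ∑ k ∈ Ico 1 n, e₂ ^ k / (k : ℝ) ^ s₂ := by
    refine summable_sum_one_div_div_sq.of_norm_bounded fun n => ?_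
    rw [Real.norm_eq_abs, abs_mul, mul_comm, ← mul_one_div (∑ k ∈ _, _)]
    exact mul_le_mul (abs_sum_pow_div_pow_le he₂ hs₂ n) (abs_pow_div_pow_le he₁ hs₁ n)
      (abs_nonneg _) (by positivity)
  refine tendsto_nhds_limUnder ⟨_, (hsummable.tendsto_sum_tsum_nat.comp
    (tendsto_add_atTop_nat 1)).congr fun N => ?_⟩
  simp only [Function.comp_apply, mul_sum, div_mul_div_comm]
  rw [sum_range_eq_add_Ico _ N.add_one_pos, Ico_eq_empty_of_le zero_le_one, sum_empty, zero_add,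
    Ico_add_one_right_eq_Icc]

lemma tendsto_eulerSum3_neg_one {s₁ s₂ s₃ : ℕ} (hs₁ : 1 ≤ s₁) (hs₂ : 1 ≤ s₂) (hs₃ : 1 ≤ s₃)
    {e₂ e₃ : ℝ} (he₂ : |e₂| ≤ 1) (he₃ : |e₃| ≤ 1) :
    Tendsto (fun N : ℕ => ∑ n₁ ∈ Icc 1 N, ∑ n₂ ∈ Ico 1 n₁, ∑ n₃ ∈ Ico 1 n₂,
      (-1) ^ n₁ * e₂ ^ n₂ * e₃ ^ n₃ / ((n₁ : ℝ) ^ s₁ * (n₂ : ℝ) ^ s₂ * (n₃ : ℝ) ^ s₃)) atTop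
      (𝓝 (eulerSum3 s₁ s₂ s₃ (-1) e₂ e₃)) := by
  have hzero : Tendsto (fun n : ℕ => 1 / (n : ℝ) ^ s₁) atTop (𝓝 0) := by
    simpa only [one_div, Function.comp_def] using tendsto_inv_atTop_zero.comp
      ((tendsto_pow_atTop (by omega : s₁ ≠ 0)).comp tendsto_natCast_atTop_atTop)
  have hsummable : Summable fun m : ℕ => 1 / ((m + 1 : ℕ) : ℝ) ^ s₁ *
      |e₂ ^ m / (m : ℝ) ^ s₂ * ∑ k ∈ Ico 1 m, e₃ ^ k / (k : ℝ) ^ s₃| := by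
    refine summable_sum_one_div_div_sq.of_nonneg_of_le (fun m => by positivity) fun m => ?_
    rcases m.eq_zero_or_pos with rfl | hm
    · simp
    have hm' : (1 : ℝ) ≤ m := by exact_mod_cast hm
    calc _ ≤ 1 / (m : ℝ) * (1 / m * ∑ k ∈ Ico 1 m, 1 / (k : ℝ)) := by
          rw [abs_mul]
          gcongr
          · calc (m : ℝ) ≤ (m + 1 : ℕ) := by exact_mod_cast m.le_succ
              _ ≤ ((m + 1 : ℕ) : ℝ) ^ s₁ := le_self_pow₀ (by push_cast; linarith) (by omega)
          · simpa only [pow_one] using abs_pow_div_pow_le he₂ hs₂ m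
          · exact abs_sum_pow_div_pow_le he₃ hs₃ m
      _ = (∑ k ∈ Ico 1 m, 1 / (k : ℝ)) / (m : ℝ) ^ 2 := by ring
  obtain ⟨l, hl⟩ := exists_tendsto_sum_alternating_mul_sum (antitone_one_div_add_one_pow s₁)
    hzero hsummable
  refine tendsto_nhds_limUnder ⟨l, hl.congr fun N => sum_congr rfl fun n hn => ?_⟩
  rw [sum_range_eq_add_Ico _ (mem_Icc.1 hn).1, Ico_eq_empty_of_le zero_le_one, sum_empty, mul_zero,
    zero_add]
  simp only [mul_sum]
  exact sum_congr rfl fun m _ => sum_congr rfl fun k _ => by ring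

end Convergence

section Coefficients

open Finset
open scoped Topology

/-- The block `∑_{k < m ≤ q} (-1)ᵐ / m` of the alternating harmonic series, which is `0` for
`q ≤ k`. -/
noncomputable def altHarmonic (k q : ℕ) : ℝ :=
  ∑ m ∈ Ioc k q, (-1) ^ m * (1 / (m : ℝ))

lemma altHarmonic_of_le {k q : ℕ} (h : q ≤ k) : altHarmonic k q = 0 := by
  rw [altHarmonic, Ioc_eq_empty_of_le h, sum_empty]

lemma altHarmonic_add_altHarmonic {k l q : ℕ} (hkl : k ≤ l) (hlq : l ≤ q) :
    altHarmonic k l + altHarmonic l q = altHarmonic k q :=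
  sum_Ioc_consecutive _ hkl hlq

lemma altHarmonic_sub_one_add {k n : ℕ} (h : k < n) :
    altHarmonic k (n - 1) + (-1) ^ n * (1 / (n : ℝ)) = altHarmonic k n := by
  obtain ⟨q, rfl⟩ := Nat.exists_eq_add_one_of_ne_zero (Nat.ne_zero_of_lt h)
  exact (sum_Ioc_succ_top (Nat.le_of_lt_succ h) _).symm

lemma abs_altHarmonic_le (k q : ℕ) : |altHarmonic k q| ≤ 1 / ((k + 1 : ℕ) : ℝ) :=
  abs_sum_Ioc_alternating_le (f := fun m => 1 / (m : ℝ))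
    (by simpa only [pow_one] using antitone_one_div_add_one_pow 1) (fun n => by positivity) k q

lemma altHarmonic_add_sub_one_sub {k : ℕ} (hk : 0 < k) (p : ℕ) :
    altHarmonic k (k + p - 1) - altHarmonic k p =
      ∑ j ∈ Ico 1 k with k < p + j, (-1) ^ (p + j) * (1 / ((p + j : ℕ) : ℝ)) := by
  have hblock : altHarmonic (max k p) (k + p - 1) =
      ∑ j ∈ Ico 1 k with k < p + j, (-1) ^ (p + j) * (1 / ((p + j : ℕ) : ℝ)) := by
    refine sum_nbij' (· - p) (p + ·) ?_ ?_ ?_ ?_ ?_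
    all_goals simp only [mem_Ioc, mem_filter, mem_Ico]
    any_goals omega
    intro m hm
    rw [Nat.add_sub_cancel' (by omega)]
  rw [← hblock]
  rcases le_total p k with h | h
  · rw [max_eq_left h, altHarmonic_of_le h, sub_zero]
  · rw [max_eq_right h, sub_eq_iff_eq_add', altHarmonic_add_altHarmonic h (by omega)]

lemma sum_Ioc_one_div_mul_add {j : ℕ} (hj : 0 < j) {c M : ℕ} (hcM : c ≤ M) :
    ∑ p ∈ Ioc c M, 1 / ((p : ℝ) * (p + j : ℕ)) =
      1 / j * (∑ i ∈ Ioc c (c + j), 1 / (i : ℝ) - ∑ i ∈ Ioc M (M + j), 1 / (i : ℝ)) := by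
  have hsplit : ∑ i ∈ Ioc c (c + j), 1 / (i : ℝ) + ∑ i ∈ Ioc (c + j) (M + j), 1 / (i : ℝ) =
      ∑ i ∈ Ioc c M, 1 / (i : ℝ) + ∑ i ∈ Ioc M (M + j), 1 / (i : ℝ) := by
    rw [sum_Ioc_consecutive _ (by omega) (by omega), sum_Ioc_consecutive _ hcM (by omega)]
  have hshift : ∑ i ∈ Ioc (c + j) (M + j), 1 / (i : ℝ) = ∑ p ∈ Ioc c M, 1 / ((p + j : ℕ) : ℝ) := by
    rw [← map_add_right_Ioc, sum_map]
    rfl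
  rw [sub_eq_sub_iff_add_eq_add.2 hsplit, hshift, ← sum_sub_distrib, mul_sum]
  refine sum_congr rfl fun p hp => ?_
  have hp' : (p : ℝ) ≠ 0 := by exact_mod_cast (by have := mem_Ioc.1 hp; omega : p ≠ 0)
  have hj' : (j : ℝ) ≠ 0 := by exact_mod_cast hj.ne'
  push_cast
  have hpj : (p : ℝ) + j ≠ 0 := by positivity
  field_simp
  ring

lemma one_div_mul_sum_Ioc_one_div_le (c j : ℕ) :
    1 / (j : ℝ) * ∑ i ∈ Ioc c (c + j), 1 / (i : ℝ) ≤ 1 / ((c + 1 : ℕ) : ℝ) := by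
  have hsum : ∑ i ∈ Ioc c (c + j), 1 / (i : ℝ) ≤ j * (1 / ((c + 1 : ℕ) : ℝ)) := by
    simpa using sum_le_card_nsmul (Ioc c (c + j)) (fun i : ℕ => 1 / (i : ℝ)) _ fun i hi =>
      one_div_le_one_div_of_le (by positivity) (Nat.cast_le.2 (Nat.succ_le_of_lt (mem_Ioc.1 hi).1))
  rcases j.eq_zero_or_pos with rfl | hj
  · rw [Nat.cast_zero, div_zero, zero_mul]
    positivity
  · rw [one_div, inv_mul_le_iff₀ (by exact_mod_cast hj)]
    exact hsum

lemma abs_sum_Ioc_one_div_mul_add_sub_le {j : ℕ} (hj : 0 < j) (c M : ℕ) :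
    |∑ p ∈ Ioc c M, 1 / ((p : ℝ) * (p + j : ℕ)) - 1 / j * ∑ i ∈ Ioc c (c + j), 1 / (i : ℝ)| ≤
      1 / ((M + 1 : ℕ) : ℝ) := by
  rcases le_total c M with h | h
  · rw [sum_Ioc_one_div_mul_add hj h, ← mul_sub, sub_sub_cancel_left, mul_neg, abs_neg,
      abs_of_nonneg (by positivity)]
    exact one_div_mul_sum_Ioc_one_div_le M j
  · rw [Ioc_eq_empty_of_le h, sum_empty, zero_sub, abs_neg, abs_of_nonneg (by positivity)]
    exact (one_div_mul_sum_Ioc_one_div_le c j).trans (by gcongr)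

lemma sum_alternating_mul_altHarmonic_sub {k : ℕ} (hk : 0 < k) (M : ℕ) :
    ∑ p ∈ Ioc 0 M, (-1) ^ p * (1 / (p : ℝ)) * (altHarmonic k (k + p - 1) - altHarmonic k p) =
      ∑ j ∈ Ico 1 k, (-1) ^ j * ∑ p ∈ Ioc (k - j) M, 1 / ((p : ℝ) * (p + j : ℕ)) := by
  simp_rw [altHarmonic_add_sub_one_sub hk, mul_sum]
  rw [sum_comm' (t' := Ico 1 k) (s' := fun j => Ioc (k - j) M)
    (by simp only [mem_Ioc, mem_filter, mem_Ico]; omega)]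
  refine sum_congr rfl fun j _ => sum_congr rfl fun p _ => ?_
  have hsign : (-1 : ℝ) ^ p * (-1) ^ p = 1 := pow_mul_pow_eq_one p (by norm_num)
  rw [pow_add, ← one_div_mul_one_div]
  linear_combination (-1) ^ j * (1 / (p : ℝ)) * (1 / ((p + j : ℕ) : ℝ)) * hsign

lemma sum_range_altHarmonic_div_sub (k : ℕ) :
    ∑ l ∈ range k, altHarmonic l (k - 1) / ((k : ℝ) - l) =
      ∑ j ∈ Ico 1 k, (-1) ^ j * (1 / j * ∑ i ∈ Ioc (k - j) k, 1 / (i : ℝ)) := by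
  simp_rw [altHarmonic, sum_div]
  rw [sum_comm' (t' := Ico 1 k) (s' := range)
    (by simp only [mem_range, mem_Ioc, mem_Ico]; omega)]
  refine sum_congr rfl fun j hj => ?_
  have hreflect : ∑ i ∈ Ioc (k - j) k, 1 / (i : ℝ) = ∑ l ∈ range j, 1 / ((k : ℝ) - l) := by
    have := mem_Ico.1 hj
    refine sum_nbij' (k - ·) (k - ·) ?_ ?_ ?_ ?_ ?_
    all_goals simp only [mem_Ioc, mem_range]
    any_goals omega
    intro i hi
    rw [Nat.cast_sub hi.2, sub_sub_cancel]
  simp_rw [hreflect, mul_sum]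
  exact sum_congr rfl fun l _ => by ring

/-- The coefficient of `k⁻ᵘ` in `∑_{a + c = u + 1} ζ(ā, 1̄, c)` truncated at `n₁ ≤ N`, after each
`∑_{a + c = u + 1} n⁻ᵃ l⁻ᶜ` has been written as `(l⁻ᵘ - n⁻ᵘ) / (n - l)`. -/
noncomputable def leftCoeff (k N : ℕ) : ℝ :=
  ∑ n ∈ Ioc k N, (-1) ^ n / ((n : ℝ) - k) * altHarmonic k (n - 1) -
    (-1) ^ k * ∑ l ∈ Ico 1 k, altHarmonic l (k - 1) / ((k : ℝ) - l)

/-- The coefficient of `k⁻ᵘ` in `ζ(1̄, 1̄, ū) + ζ(2, ū) + ζ(v̄, 1̄)`, `v = u + 1`, truncated at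
`n₁ ≤ N`: the first two sums give the block sum, the last one gives `altHarmonic 0 (k - 1) / k`. -/
noncomputable def rightCoeff (k N : ℕ) : ℝ :=
  (-1) ^ k * (∑ n ∈ Ioc k N, (-1) ^ n * (1 / (n : ℝ)) * altHarmonic k n +
    altHarmonic 0 (k - 1) / k)

lemma sum_Ioc_alternating_div_sub_mul_altHarmonic (k M : ℕ) :
    ∑ n ∈ Ioc k (k + M), (-1) ^ n / ((n : ℝ) - k) * altHarmonic k (n - 1) =
      (-1) ^ k * ∑ p ∈ Ioc 0 M, (-1) ^ p * (1 / (p : ℝ)) * altHarmonic k (k + p - 1) := by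
  have hIoc : Ioc k (k + M) = (Ioc 0 M).map (addLeftEmbedding k) := by simp
  rw [hIoc, sum_map, mul_sum]
  refine sum_congr rfl fun p _ => ?_
  simp only [addLeftEmbedding_apply, pow_add]
  push_cast
  ring

lemma sum_Ioc_alternating_mul_altHarmonic (k M : ℕ) :
    ∑ n ∈ Ioc k (k + M), (-1) ^ n * (1 / (n : ℝ)) * altHarmonic k n =
      ∑ p ∈ Ioc 0 M, (-1) ^ p * (1 / (p : ℝ)) * altHarmonic k p +
        ∑ n ∈ Ioc M (M + k), (-1) ^ n * (1 / (n : ℝ)) * altHarmonic k n := by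
  rw [sum_Ioc_consecutive _ M.zero_le (M.le_add_right k), add_comm k M,
    ← sum_Ioc_consecutive _ k.zero_le (k.le_add_left M), right_eq_add]
  exact sum_eq_zero fun n hn => by rw [altHarmonic_of_le (mem_Ioc.1 hn).2, mul_zero]

lemma neg_one_pow_mul_leftCoeff_sub_rightCoeff {k : ℕ} (hk : 0 < k) (M : ℕ) :
    (-1) ^ k * (leftCoeff k (k + M) - rightCoeff k (k + M)) =
      ∑ j ∈ Ico 1 k, (-1) ^ j * (∑ p ∈ Ioc (k - j) M, 1 / ((p : ℝ) * (p + j : ℕ)) -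
        1 / j * ∑ i ∈ Ioc (k - j) k, 1 / (i : ℝ)) -
      ∑ n ∈ Ioc M (M + k), (-1) ^ n * (1 / (n : ℝ)) * altHarmonic k n := by
  have hsign : (-1 : ℝ) ^ k * (-1) ^ k = 1 := pow_mul_pow_eq_one k (by norm_num)
  have hblocks := sum_alternating_mul_altHarmonic_sub hk M
  have hreflected := sum_range_altHarmonic_div_sub k
  rw [sum_range_eq_add_Ico _ hk, Nat.cast_zero, sub_zero] at hreflected
  simp only [mul_sub _ (altHarmonic _ _), sum_sub_distrib] at hblocks
  simp only [mul_sub, sum_sub_distrib, leftCoeff, rightCoeff,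
    sum_Ioc_alternating_div_sub_mul_altHarmonic, sum_Ioc_alternating_mul_altHarmonic]
  rw [← hblocks, ← hreflected]
  simp only [← mul_assoc, hsign]
  ring

lemma abs_sum_Ioc_alternating_mul_altHarmonic_le {k : ℕ} (hk : 0 < k) (M : ℕ) :
    |∑ n ∈ Ioc M (M + k), (-1) ^ n * (1 / (n : ℝ)) * altHarmonic k n| ≤
      1 / ((M + 1 : ℕ) : ℝ) := by
  have hterm : ∀ n ∈ Ioc M (M + k), |(-1) ^ n * (1 / (n : ℝ)) * altHarmonic k n| ≤
      1 / ((M + 1 : ℕ) : ℝ) * (1 / k) := fun n hn => by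
    rw [abs_mul, abs_mul, abs_neg_one_pow, one_mul, abs_of_nonneg (by positivity)]
    have hn' : ((M + 1 : ℕ) : ℝ) ≤ n := by exact_mod_cast (mem_Ioc.1 hn).1
    have hblock : |altHarmonic k n| ≤ 1 / k := (abs_altHarmonic_le k n).trans (by gcongr; omega)
    gcongr
  refine (abs_sum_le_sum_abs _ _).trans ((sum_le_card_nsmul _ _ _ hterm).trans_eq ?_)
  rw [Nat.card_Ioc, Nat.add_sub_cancel_left, nsmul_eq_mul]
  field_simp

lemma abs_leftCoeff_sub_rightCoeff_le {k : ℕ} (hk : 0 < k) (M : ℕ) :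
    |leftCoeff k (k + M) - rightCoeff k (k + M)| ≤ k / ((M + 1 : ℕ) : ℝ) := by
  have hblocks : |∑ j ∈ Ico 1 k, (-1) ^ j * (∑ p ∈ Ioc (k - j) M, 1 / ((p : ℝ) * (p + j : ℕ)) -
      1 / j * ∑ i ∈ Ioc (k - j) k, 1 / (i : ℝ))| ≤ (k - 1) * (1 / ((M + 1 : ℕ) : ℝ)) := by
    rw [← Nat.cast_pred hk, ← nsmul_eq_mul, ← Nat.card_Ico 1 k]
    refine (abs_sum_le_sum_abs _ _).trans (sum_le_card_nsmul _ _ _ fun j hj => ?_)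
    obtain ⟨hj, hjk⟩ := mem_Ico.1 hj
    rw [abs_mul, abs_neg_one_pow, one_mul]
    simpa only [Nat.sub_add_cancel hjk.le] using abs_sum_Ioc_one_div_mul_add_sub_le hj (k - j) M
  calc |leftCoeff k (k + M) - rightCoeff k (k + M)|
      = |(-1) ^ k * (leftCoeff k (k + M) - rightCoeff k (k + M))| := by
        rw [abs_mul, abs_neg_one_pow, one_mul]
    _ ≤ (k - 1) * (1 / ((M + 1 : ℕ) : ℝ)) + 1 / ((M + 1 : ℕ) : ℝ) := by
        rw [neg_one_pow_mul_leftCoeff_sub_rightCoeff hk]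
        exact (abs_sub _ _).trans
          (add_le_add hblocks (abs_sum_Ioc_alternating_mul_altHarmonic_le hk M))
    _ = k / ((M + 1 : ℕ) : ℝ) := by ring

lemma tendsto_sum_one_div_mul_add_one_sub :
    Tendsto (fun N : ℕ => ∑ k ∈ Icc 1 N, 1 / ((k : ℝ) * (N + 1 - k : ℕ))) atTop (𝓝 0) := by
  have hcesaro := ((tendsto_one_div_atTop_nhds_zero_nat (𝕜 := ℝ)).cesaro.comp
    (tendsto_add_atTop_nat 1)).const_mul 2
  rw [mul_zero] at hcesaro
  refine hcesaro.congr fun N => ?_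
  have hreflect : ∑ k ∈ Icc 1 N, 1 / ((N + 1 - k : ℕ) : ℝ) = ∑ k ∈ Icc 1 N, 1 / (k : ℝ) := by
    refine sum_nbij' (N + 1 - ·) (N + 1 - ·) ?_ ?_ ?_ ?_ fun _ _ => rfl
    all_goals simp only [mem_Icc]; omega
  calc 2 * (((N + 1 : ℕ) : ℝ)⁻¹ * ∑ k ∈ range (N + 1), 1 / (k : ℝ))
      = 1 / ((N + 1 : ℕ) : ℝ) * ∑ k ∈ Icc 1 N, (1 / (k : ℝ) + 1 / ((N + 1 - k : ℕ) : ℝ)) := by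
        rw [sum_add_distrib, hreflect, sum_range_eq_add_Ico _ N.add_one_pos, Nat.cast_zero,
          div_zero, Ico_add_one_right_eq_Icc]
        ring
    _ = ∑ k ∈ Icc 1 N, 1 / ((k : ℝ) * (N + 1 - k : ℕ)) := by
        rw [mul_sum]
        refine sum_congr rfl fun k hk => ?_
        obtain ⟨hk₀, hkN⟩ := mem_Icc.1 hk
        obtain ⟨M, rfl⟩ := Nat.exists_eq_add_of_le hkN
        have hk' : (k : ℝ) ≠ 0 := by exact_mod_cast (by omega : k ≠ 0)
        rw [add_assoc, Nat.add_sub_cancel_left]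
        push_cast
        field_simp
        ring

lemma tendsto_sum_leftCoeff_sub_rightCoeff {u : ℕ} (hu : 2 ≤ u) :
    Tendsto (fun N => ∑ k ∈ Icc 1 N, (leftCoeff k N - rightCoeff k N) / (k : ℝ) ^ u) atTop
      (𝓝 0) := by
  refine squeeze_zero_norm (fun N => ?_) tendsto_sum_one_div_mul_add_one_sub
  refine (norm_sum_le _ _).trans (sum_le_sum fun k hk => ?_)
  obtain ⟨hk₀, hkN⟩ := mem_Icc.1 hk
  obtain ⟨M, rfl⟩ := Nat.exists_eq_add_of_le hkN
  have hk' : (1 : ℝ) ≤ k := by exact_mod_cast hk₀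
  rw [add_assoc, Nat.add_sub_cancel_left, norm_div, Real.norm_eq_abs, norm_pow, Real.norm_natCast]
  calc |leftCoeff k (k + M) - rightCoeff k (k + M)| / (k : ℝ) ^ u
      ≤ k / ((M + 1 : ℕ) : ℝ) / (k : ℝ) ^ 2 := by
        gcongr
        exact abs_leftCoeff_sub_rightCoeff_le hk₀ M
    _ = 1 / ((k : ℝ) * (M + 1 : ℕ)) := by field_simp

end Coefficients

section PartialSums

open Finset

lemma sum_Icc_sum_Ico_comm {M : Type*} [AddCommMonoid M] (f : ℕ → ℕ → M) (N : ℕ) :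
    ∑ n ∈ Icc 1 N, ∑ k ∈ Ico 1 n, f n k = ∑ k ∈ Icc 1 N, ∑ n ∈ Ioc k N, f n k :=
  sum_comm' (by simp only [mem_Icc, mem_Ico, mem_Ioc]; omega)

lemma sum_one_div_pow_mul_pow {K : Type*} [Field K] {x y : K} (hx : x ≠ 0) (hy : y ≠ 0)
    (hxy : x ≠ y) (u : ℕ) :
    ∑ a ∈ Icc 1 u, 1 / (x ^ a * y ^ (u + 1 - a)) = (1 / y ^ u - 1 / x ^ u) / (x - y) := by
  have hsub : x - y ≠ 0 := sub_ne_zero.2 hxy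
  calc ∑ a ∈ Icc 1 u, 1 / (x ^ a * y ^ (u + 1 - a))
      = x⁻¹ * y⁻¹ * ∑ i ∈ range u, x⁻¹ ^ i * y⁻¹ ^ (u - 1 - i) := by
        rw [← Ico_add_one_right_eq_Icc, sum_Ico_eq_sum_range, Nat.add_sub_cancel, mul_sum]
        refine sum_congr rfl fun i hi => ?_
        rw [show u + 1 - (1 + i) = u - 1 - i + 1 by have := mem_range.1 hi; omega]
        ring
    _ = x⁻¹ * y⁻¹ * ((x⁻¹ ^ u - y⁻¹ ^ u) / (x⁻¹ - y⁻¹)) := by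
        rw [geom₂_sum (inv_injective.ne hxy)]
    _ = (1 / y ^ u - 1 / x ^ u) / (x - y) := by
        rw [inv_sub_inv hx hy, ← neg_sub x y, inv_pow, inv_pow]
        field_simp
        ring

lemma sum_Ico_sum_Ico_eq_sum_altHarmonic (a c n : ℕ) (e : ℝ) :
    ∑ m ∈ Ico 1 n, ∑ k ∈ Ico 1 m,
      (-1) ^ n * (-1) ^ m * e ^ k / ((n : ℝ) ^ a * (m : ℝ) ^ 1 * (k : ℝ) ^ c) =
    ∑ k ∈ Ico 1 n, (-1) ^ n * altHarmonic k (n - 1) * (e ^ k / ((n : ℝ) ^ a * (k : ℝ) ^ c)) := by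
  rw [sum_comm' (t' := Ico 1 n) (s' := fun k => Ioc k (n - 1))
    (by simp only [mem_Ico, mem_Ioc]; omega)]
  simp_rw [altHarmonic, mul_sum, sum_mul]
  exact sum_congr rfl fun k _ => sum_congr rfl fun m _ => by ring

lemma sum_eulerSum3_truncation_eq_sum_leftCoeff (u N : ℕ) :
    ∑ a ∈ Icc 1 u, ∑ n ∈ Icc 1 N, ∑ m ∈ Ico 1 n, ∑ k ∈ Ico 1 m,
      (-1) ^ n * (-1) ^ m * 1 ^ k / ((n : ℝ) ^ a * (m : ℝ) ^ 1 * (k : ℝ) ^ (u + 1 - a)) =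
    ∑ k ∈ Icc 1 N, leftCoeff k N / (k : ℝ) ^ u := by
  have hgeom : ∀ n ∈ Icc 1 N, ∀ k ∈ Ico 1 n,
      ∑ a ∈ Icc 1 u, (-1) ^ n * altHarmonic k (n - 1) *
        (1 ^ k / ((n : ℝ) ^ a * (k : ℝ) ^ (u + 1 - a))) =
      (-1) ^ n / ((n : ℝ) - k) * altHarmonic k (n - 1) / (k : ℝ) ^ u -
        (-1) ^ n * (altHarmonic k (n - 1) / ((n : ℝ) - k)) / (n : ℝ) ^ u := fun n _ k hk => by
    obtain ⟨hk, hkn⟩ := mem_Ico.1 hk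
    have hk₀ : (k : ℝ) ≠ 0 := by exact_mod_cast (by omega : k ≠ 0)
    have hn₀ : (n : ℝ) ≠ 0 := by exact_mod_cast (by omega : n ≠ 0)
    have hnk : (n : ℝ) ≠ k := by exact_mod_cast hkn.ne'
    rw [one_pow, ← mul_sum, sum_one_div_pow_mul_pow hn₀ hk₀ hnk]
    ring
  simp_rw [sum_Ico_sum_Ico_eq_sum_altHarmonic]
  calc _ = ∑ n ∈ Icc 1 N, ∑ k ∈ Ico 1 n,
        ((-1) ^ n / ((n : ℝ) - k) * altHarmonic k (n - 1) / (k : ℝ) ^ u -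
          (-1) ^ n * (altHarmonic k (n - 1) / ((n : ℝ) - k)) / (n : ℝ) ^ u) := by
        rw [sum_comm]
        refine sum_congr rfl fun n hn => ?_
        rw [sum_comm]
        exact sum_congr rfl (hgeom n hn)
    _ = ∑ k ∈ Icc 1 N, leftCoeff k N / (k : ℝ) ^ u := by
        simp_rw [sum_sub_distrib, leftCoeff, sub_div, sum_sub_distrib, mul_sum, sum_div]
        rw [sum_Icc_sum_Ico_comm]

lemma eulerSum_truncation_add_eq_sum_rightCoeff (u N : ℕ) :
    ∑ n ∈ Icc 1 N, ∑ m ∈ Ico 1 n, ∑ k ∈ Ico 1 m,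
        (-1) ^ n * (-1) ^ m * (-1) ^ k / ((n : ℝ) ^ 1 * (m : ℝ) ^ 1 * (k : ℝ) ^ u) +
      ∑ n ∈ Icc 1 N, ∑ k ∈ Ico 1 n, 1 ^ n * (-1) ^ k / ((n : ℝ) ^ 2 * (k : ℝ) ^ u) +
      ∑ n ∈ Icc 1 N, ∑ m ∈ Ico 1 n, (-1) ^ n * (-1) ^ m / ((n : ℝ) ^ (u + 1) * (m : ℝ) ^ 1) =
    ∑ k ∈ Icc 1 N, rightCoeff k N / (k : ℝ) ^ u := by
  have hterm : ∀ k, ∀ n ∈ Ioc k N,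
      (-1) ^ n * altHarmonic k (n - 1) * ((-1) ^ k / ((n : ℝ) ^ 1 * (k : ℝ) ^ u)) +
        1 ^ n * (-1) ^ k / ((n : ℝ) ^ 2 * (k : ℝ) ^ u) =
      (-1) ^ k * ((-1) ^ n * (1 / (n : ℝ)) * altHarmonic k n) / (k : ℝ) ^ u := fun k n hn => by
    have hsign : (-1 : ℝ) ^ n * (-1) ^ n = 1 := pow_mul_pow_eq_one n (by norm_num)
    rw [← altHarmonic_sub_one_add (mem_Ioc.1 hn).1, one_pow]
    linear_combination -((-1) ^ k / ((n : ℝ) ^ 2 * (k : ℝ) ^ u)) * hsign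
  have hIco : ∀ n, Ico 1 n = Ioc 0 (n - 1) := fun n => by
    ext m
    simp only [mem_Ico, mem_Ioc]
    omega
  simp_rw [sum_Ico_sum_Ico_eq_sum_altHarmonic]
  rw [sum_Icc_sum_Ico_comm, sum_Icc_sum_Ico_comm, ← sum_add_distrib, ← sum_add_distrib]
  refine sum_congr rfl fun k _ => ?_
  rw [rightCoeff, mul_add, add_div, ← sum_add_distrib, sum_congr rfl (hterm k), mul_sum, sum_div,
    altHarmonic, hIco, sum_div, mul_sum, sum_div]
  exact congrArg _ (sum_congr rfl fun m _ => by ring)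

end PartialSums

/-- For `w ≥ 4`, with `u = w − 2`, `v = w − 1`:
`∑_{a+c=w−1, a,c≥1} ζ(ā,1̄,c) = ζ(1̄,1̄,ū) + ζ(2,ū) + ζ(v̄,1̄)`. -/
theorem sum_zeta_bara_bar1_c (w : ℕ) (hw : 4 ≤ w) :
    ∑ a ∈ Finset.Icc 1 (w - 2), eulerSum3 a 1 (w - 1 - a) (-1) (-1) 1
      = eulerSum3 1 1 (w - 2) (-1) (-1) (-1) + eulerSum2 2 (w - 2) 1 (-1)
        + eulerSum2 (w - 1) 1 (-1) (-1) := by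
  obtain ⟨u, rfl⟩ : ∃ u, w = u + 2 := ⟨w - 2, by omega⟩
  rw [Nat.add_sub_cancel, show u + 2 - 1 = u + 1 from rfl]
  have hleft := tendsto_finsetSum (Finset.Icc 1 u) fun a ha =>
    tendsto_eulerSum3_neg_one (Finset.mem_Icc.1 ha).1 le_rfl
      (Nat.sub_pos_of_lt (Nat.lt_succ_of_le (Finset.mem_Icc.1 ha).2)) (e₂ := -1) (e₃ := 1)
      (by simp) (by simp)
  have hright := ((tendsto_eulerSum3_neg_one le_rfl le_rfl (by omega : 1 ≤ u) (e₂ := -1) (e₃ := -1)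
    (by simp) (by simp)).add (tendsto_eulerSum2 le_rfl (by omega : 1 ≤ u) (e₁ := 1) (e₂ := -1)
    (by simp) (by simp))).add (tendsto_eulerSum2 (by omega : 2 ≤ u + 1) le_rfl (e₁ := -1)
    (e₂ := -1) (by simp) (by simp))
  simp only [sum_eulerSum3_truncation_eq_sum_leftCoeff] at hleft
  simp only [eulerSum_truncation_add_eq_sum_rightCoeff] at hright
  have hdiff := tendsto_sum_leftCoeff_sub_rightCoeff (by omega : 2 ≤ u)
  simp only [sub_div, Finset.sum_sub_distrib] at hdiff
  exact sub_eq_zero.1 (tendsto_nhds_unique (hleft.sub hright) hdiff)
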